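/- Coercivity of the Riesz fractional bilinear form in Fourier form: let α ∈ (1/2, 1) and u be smooth with compact support on ℝ. Then the quantity a(u,u) := 2 c_α ( {}_{-∞}D_x^{α} u, {}_xD_{∞}^{α} u )_{L^2(ℝ)} with c_α = 1/(2 cos(απ)) satisfies a(u,u) = ‖ {}_{-∞}D_x^{α} u ‖²_{L^2(ℝ)} ≥ 0, with equality iff u = 0. -/

import Mathlib

open MeasureTheory Set Real

/-- Left Riemann–Liouville fractional derivative of order `α ∈ (0,1)` on `ℝ`. -/
noncomputable def leftFracDerivR (α : ℝ) (u : ℝ → ℝ) (x : ℝ) : ℝ :=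
  (1 / Real.Gamma (1 - α)) *
    deriv (fun y => ∫ s in Set.Iic y, (y - s) ^ (-α) * u s) x

/-- Right Riemann–Liouville fractional derivative of order `α ∈ (0,1)` on `ℝ`. -/
noncomputable def rightFracDerivR (α : ℝ) (u : ℝ → ℝ) (x : ℝ) : ℝ :=
  -(1 / Real.Gamma (1 - α)) *
    deriv (fun y => ∫ s in Set.Ici y, (s - y) ^ (-α) * u s) x

/-! On `ℝ`, `D^α u = Γ(1 - α)⁻¹ (t₊^(-α) ⋆ u')`. The kernel `t₊^(-α)` is not integrable, but
integrating its tail by parts shows that `D^α u` is. As `D^α u` is supported on a half-line, its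
Fourier transform is the limit as `ε → 0⁺` of the transforms of `exp(-ε x) D^α u(x)`, which the
Laplace integral `∫₀^∞ t^(-α) exp(-z t) dt = Γ(1 - α) z^(α - 1)` computes; hence
`𝓕 (D^α u)(ξ) = (2πiξ)^α 𝓕 u(ξ)`. The right derivative is the reflection of the left one, so its
symbol is the conjugate `(-2πiξ)^α`. By Plancherel the pairing of the two has symbol
`Re ((2πiξ)^(2α)) = cos(απ) |2πξ|^(2α)`, and `|2πξ|^(2α)` is the symbol of `‖D^α u‖²`. -/

open Filter Topology ContinuousLinearMap
open scoped Convolution FourierTransform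
open Complex (I)

section LaplaceTransform

variable {a z : ℂ}

lemma integrableOn_cpow_mul_cexp_neg_mul_Ioi (ha : 0 < a.re) (hz : 0 < z.re) :
    IntegrableOn (fun t : ℝ => (t : ℂ) ^ (a - 1) * Complex.exp (-(z * t))) (Ioi 0) := by
  have hbound := integrableOn_rpow_mul_exp_neg_mul_rpow (p := 1) (s := a.re - 1) (b := z.re)
    (by linarith) one_pos hz
  refine Integrable.mono' hbound (by fun_prop) ?_
  filter_upwards [ae_restrict_mem measurableSet_Ioi] with t ht
  rw [norm_mul, Complex.norm_cpow_eq_rpow_re_of_pos ht, Complex.norm_exp]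
  simp

lemma differentiableAt_integral_cpow_mul_cexp_neg_mul_Ioi (ha : 0 < a.re) (hz : 0 < z.re) :
    DifferentiableAt ℂ
      (fun w : ℂ => ∫ t : ℝ in Ioi 0, (t : ℂ) ^ (a - 1) * Complex.exp (-(w * t))) z := by
  have hbound := integrableOn_rpow_mul_exp_neg_mul_rpow (p := 1) (s := a.re) (b := z.re / 2)
    (by linarith) one_pos (by linarith)
  have hnhds : {w : ℂ | z.re / 2 < w.re} ∈ 𝓝 z :=
    (isOpen_lt continuous_const Complex.continuous_re).mem_nhds (half_lt_self hz)
  refine (hasDerivAt_integral_of_dominated_loc_of_deriv_le (μ := volume.restrict (Ioi 0))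
    (F := fun (w : ℂ) (t : ℝ) => (t : ℂ) ^ (a - 1) * Complex.exp (-(w * t)))
    (F' := fun w t => (t : ℂ) ^ (a - 1) * (Complex.exp (-(w * t)) * -t)) hnhds
    (.of_forall fun w => by fun_prop) (integrableOn_cpow_mul_cexp_neg_mul_Ioi ha hz)
    (by fun_prop) ?_ hbound ?_).2.differentiableAt
  · filter_upwards [ae_restrict_mem measurableSet_Ioi] with t (ht : 0 < t) w (hw : _ < _)
    have hnorm : ‖(t : ℂ) ^ (a - 1) * (Complex.exp (-(w * t)) * -t)‖
        = t ^ a.re * Real.exp (-w.re * t) := by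
      rw [norm_mul, norm_mul, Complex.norm_cpow_eq_rpow_re_of_pos ht, Complex.norm_exp, norm_neg,
        Complex.norm_of_nonneg ht.le, Complex.sub_re, Complex.one_re, Real.rpow_sub_one ht.ne']
      simp only [Complex.neg_re, Complex.re_mul_ofReal, neg_mul]
      field_simp
    rw [hnorm, Real.rpow_one]
    gcongr
  · filter_upwards with t w _
    have hexponent : HasDerivAt (fun w : ℂ => -(w * t)) (-t) w :=
      (hasDerivAt_mul_const (t : ℂ)).neg
    exact hexponent.cexp.const_mul _

lemma integral_cpow_mul_cexp_neg_mul_Ioi (ha : 0 < a.re) (hz : 0 < z.re) :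
    ∫ t : ℝ in Ioi 0, (t : ℂ) ^ (a - 1) * Complex.exp (-(z * t)) =
      Complex.Gamma a * z ^ (-a) := by
  have hopen : IsOpen {w : ℂ | 0 < w.re} := isOpen_lt continuous_const Complex.continuous_re
  have hleft : AnalyticOnNhd ℂ
      (fun w : ℂ => ∫ t : ℝ in Ioi 0, (t : ℂ) ^ (a - 1) * Complex.exp (-(w * t)))
      {w : ℂ | 0 < w.re} :=
    DifferentiableOn.analyticOnNhd (fun w hw =>
      (differentiableAt_integral_cpow_mul_cexp_neg_mul_Ioi ha hw).differentiableWithinAt) hopen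
  have hright : AnalyticOnNhd ℂ (fun w : ℂ => Complex.Gamma a * w ^ (-a)) {w : ℂ | 0 < w.re} :=
    DifferentiableOn.analyticOnNhd (fun w hw => ((differentiableAt_id.cpow_const
      (Or.inl hw)).const_mul _).differentiableWithinAt) hopen
  have hreal : ∀ r : ℝ, 0 < r →
      ∫ t : ℝ in Ioi 0, (t : ℂ) ^ (a - 1) * Complex.exp (-(r * t)) =
        Complex.Gamma a * (r : ℂ) ^ (-a) := fun r hr => by
    rw [Complex.integral_cpow_mul_exp_neg_mul_Ioi ha hr, mul_comm, one_div,
      Complex.inv_cpow _ _ (by simp [Complex.arg_ofReal_of_nonneg hr.le, pi_ne_zero.symm]),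
      Complex.cpow_neg]
  have htendsto : Tendsto ((↑) : ℝ → ℂ) (𝓝[≠] 1) (𝓝[≠] 1) :=
    tendsto_nhdsWithin_iff.2 ⟨(Complex.continuous_ofReal.tendsto' 1 1 rfl).mono_left
      nhdsWithin_le_nhds, eventually_mem_nhdsWithin.mono fun r hr => by simpa using hr⟩
  have hpos : ∀ᶠ r : ℝ in 𝓝[≠] 1, 0 < r := nhdsWithin_le_nhds (Ioi_mem_nhds one_pos)
  exact hleft.eqOn_of_preconnected_of_frequently_eq hright
    (convex_halfSpace_re_gt 0).isPreconnected (z₀ := 1) (by simp)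
    (htendsto.frequently (hpos.mono hreal).frequently) hz

end LaplaceTransform

section Fourier

variable {V E : Type*} [NormedAddCommGroup V] [InnerProductSpace ℝ V] [FiniteDimensional ℝ V]
  [MeasurableSpace V] [BorelSpace V] [NormedAddCommGroup E]

section NormedSpace

variable [NormedSpace ℂ E] {f : V → E}

lemma continuous_fourier (hf : Integrable f) : Continuous (𝓕 f) :=
  VectorFourier.fourierIntegral_continuous Real.continuous_fourierChar continuous_inner hf

lemma norm_fourier_le (f : V → E) (ξ : V) : ‖𝓕 f ξ‖ ≤ ∫ x, ‖f x‖ :=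
  VectorFourier.norm_fourierIntegral_le_integral_norm _ _ _ _ _

lemma fourier_comp_neg (f : V → E) (ξ : V) : 𝓕 (fun x => f (-x)) ξ = 𝓕 f (-ξ) := by
  rw [← Real.fourierInv_eq_fourier_neg, Real.fourierInv_eq_fourier_comp_neg]

lemma eq_zero_of_fourier_ae_eq_zero [CompleteSpace E] (hf : Continuous f) (hint : Integrable f)
    (hzero : 𝓕 f =ᵐ[volume] 0) : f = 0 := by
  rw [← hf.fourierInv_fourier_eq hint ((integrable_zero _ _ _).congr hzero.symm)]
  ext x
  rw [Real.fourierInv_eq]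
  exact integral_eq_zero_of_ae (hzero.mono fun ξ hξ => by simp [hξ])

end NormedSpace

section Plancherel

variable [InnerProductSpace ℂ E] {f g : V → E}

lemma integrable_inner_fourier_fourier (hf : Integrable f) (hg' : Integrable (𝓕 g)) :
    Integrable fun ξ => inner ℂ (𝓕 f ξ) (𝓕 g ξ) := by
  refine Integrable.mono' (hg'.norm.const_mul (∫ x, ‖f x‖))
    ((continuous_fourier hf).aestronglyMeasurable.inner hg'.aestronglyMeasurable)
    (.of_forall fun ξ => ?_)
  calc ‖inner ℂ (𝓕 f ξ) (𝓕 g ξ)‖ ≤ ‖𝓕 f ξ‖ * ‖𝓕 g ξ‖ := norm_inner_le_norm _ _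
    _ ≤ (∫ x, ‖f x‖) * ‖𝓕 g ξ‖ := by
      gcongr
      exact norm_fourier_le f ξ

lemma integral_inner_fourier_fourier [CompleteSpace E] (hf : Integrable f) (hgc : Continuous g)
    (hg : Integrable g) (hg' : Integrable (𝓕 g)) :
    ∫ ξ, inner ℂ (𝓕 f ξ) (𝓕 g ξ) = ∫ x, inner ℂ (f x) (g x) := by
  calc ∫ ξ, inner ℂ (𝓕 f ξ) (𝓕 g ξ) = ∫ x, inner ℂ (f x) (𝓕⁻ (𝓕 g) x) := by
        simpa using! VectorFourier.integral_sesq_fourierIntegral_eq_neg_flip (innerSL ℂ)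
          (L := innerₗ V) Real.continuous_fourierChar continuous_inner hf hg'
    _ = ∫ x, inner ℂ (f x) (g x) := by rw [hgc.fourierInv_fourier_eq hg hg']

lemma integral_mul_eq_integral_re_inner_fourier {f g : V → ℝ} (hf : Integrable f)
    (hgc : Continuous g) (hg : Integrable g)
    (hg' : Integrable (𝓕 fun x => (g x : ℂ))) :
    ∫ x, f x * g x =
      ∫ ξ, (inner ℂ (𝓕 (fun x => (f x : ℂ)) ξ) (𝓕 (fun x => (g x : ℂ)) ξ)).re := by
  have hplancherel := integral_inner_fourier_fourier
    (f := fun x => (f x : ℂ)) (g := fun x => (g x : ℂ)) hf.ofReal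
    (by fun_prop) hg.ofReal hg'
  have hreal : ∫ x, inner ℂ (f x : ℂ) (g x : ℂ) = ((∫ x, f x * g x : ℝ) : ℂ) := by
    rw [← integral_complex_ofReal]
    exact integral_congr_ae (.of_forall fun x => by simp [mul_comm])
  rw [← Complex.ofReal_re (∫ x, f x * g x), ← hreal, ← hplancherel]
  exact (integral_re (integrable_inner_fourier_fourier hf.ofReal hg')).symm

end Plancherel

end Fourier

section FourierDecay

variable {E : Type*} [NormedAddCommGroup E] [NormedSpace ℂ E] {v : ℝ → E}

lemma one_add_sq_mul_norm_fourier_le (hv : ContDiff ℝ 2 v) (hv0 : Integrable v)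
    (hv1 : Integrable (deriv v)) (hv2 : Integrable (deriv (deriv v))) (ξ : ℝ) :
    (1 + |2 * π * ξ| ^ 2) * ‖𝓕 v ξ‖ ≤ (∫ x, ‖v x‖) + ∫ x, ‖deriv (deriv v) x‖ := by
  have hfourier : 𝓕 (deriv (deriv v)) ξ = (2 * π * I * ξ) ^ 2 • 𝓕 v ξ := by
    rw [Real.fourier_deriv hv1 ((contDiff_succ_iff_deriv (n := 1)).1 hv |>.2.2.differentiable
      one_ne_zero) hv2, Real.fourier_deriv hv0 (hv.differentiable two_ne_zero) hv1]
    simp only [smul_smul, sq]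
  have hnorm : |2 * π * ξ| ^ 2 * ‖𝓕 v ξ‖ = ‖𝓕 (deriv (deriv v)) ξ‖ := by
    rw [hfourier, norm_smul]
    simp [abs_mul]
  rw [add_mul, one_mul, hnorm]
  exact add_le_add (norm_fourier_le v ξ) (norm_fourier_le _ ξ)

lemma integrable_abs_rpow_mul_norm_fourier (hv : ContDiff ℝ 2 v) (hv0 : Integrable v)
    (hv1 : Integrable (deriv v)) (hv2 : Integrable (deriv (deriv v))) {β : ℝ} (hβ0 : 0 ≤ β)
    (hβ1 : β < 1) : Integrable fun ξ => |2 * π * ξ| ^ β * ‖𝓕 v ξ‖ := by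
  have hdim : (Module.finrank ℝ ℝ : ℝ) < 2 - β := by
    rw [Module.finrank_self, Nat.cast_one]
    linarith
  set C := (∫ x, ‖v x‖) + ∫ x, ‖deriv (deriv v) x‖
  have hbound : Integrable fun ξ : ℝ => C * (1 + |2 * π * ξ| ^ 2) ^ (-(2 - β) / 2) :=
    ((integrable_rpow_neg_one_add_norm_sq hdim).comp_mul_left' two_pi_pos.ne').const_mul C
  have hcont : Continuous (𝓕 v) := continuous_fourier hv0
  refine hbound.mono' (by fun_prop) (.of_forall fun ξ => ?_)
  set s := |2 * π * ξ|
  have hs : 0 ≤ s := abs_nonneg _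
  have hbase : 0 < 1 + s ^ 2 := by positivity
  rw [Real.norm_of_nonneg (by positivity)]
  calc s ^ β * ‖𝓕 v ξ‖ = (s ^ 2) ^ (β / 2) * ‖𝓕 v ξ‖ := by
        rw [← Real.rpow_natCast_mul hs, Nat.cast_ofNat, mul_div_cancel₀ _ two_ne_zero]
    _ ≤ (1 + s ^ 2) ^ (β / 2) * ‖𝓕 v ξ‖ := by
        gcongr
        linarith
    _ = (1 + s ^ 2) * ‖𝓕 v ξ‖ * (1 + s ^ 2) ^ (-(2 - β) / 2) := by
        rw [show β / 2 = 1 + -(2 - β) / 2 by ring, Real.rpow_add hbase, Real.rpow_one]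
        ring
    _ ≤ C * (1 + s ^ 2) ^ (-(2 - β) / 2) := by
        gcongr
        exact one_add_sq_mul_norm_fourier_le hv hv0 hv1 hv2 ξ

end FourierDecay

lemma re_cpow_mul_self_of_re_eq_zero {z : ℂ} (hre : z.re = 0) (hz : z ≠ 0) (α : ℝ) :
    (z ^ (α : ℂ) * z ^ (α : ℂ)).re = cos (α * π) * ‖z ^ (α : ℂ)‖ ^ 2 := by
  have him : z.im ≠ 0 := fun him => hz (Complex.ext hre him)
  have harg : cos (α * π) = cos (2 * (z.arg * α)) := by
    rcases him.lt_or_gt with him | him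
    · rw [Complex.arg_eq_neg_pi_div_two_iff.2 ⟨hre, him⟩, ← Real.cos_neg]
      ring_nf
    · rw [Complex.arg_eq_pi_div_two_iff.2 ⟨hre, him⟩]
      ring_nf
  rw [Complex.norm_cpow_real, harg, Real.cos_two_mul', Complex.mul_re, Complex.cpow_ofReal_re,
    Complex.cpow_ofReal_im]
  ring

lemma conj_neg_cpow_of_re_eq_zero {z : ℂ} (hre : z.re = 0) (α : ℝ) :
    starRingEnd ℂ ((-z) ^ (α : ℂ)) = z ^ (α : ℂ) := by
  have hconj : starRingEnd ℂ (-z) = z := Complex.ext (by simp [hre]) (by simp)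
  have harg : (-z).arg ≠ π := fun h => by simp [Complex.arg_eq_pi_iff, hre] at h
  rw [← Complex.conj_ofReal α, ← Complex.conj_cpow _ _ harg, hconj, Complex.conj_ofReal]

lemma cos_mul_pi_ne_zero {α : ℝ} (hα0 : 0 < α) (hα1 : α < 1) (hα : α ≠ 1 / 2) :
    cos (α * π) ≠ 0 := by
  rw [Ne, Real.cos_eq_zero_iff]
  rintro ⟨k, hk⟩
  have hαk : α = (2 * k + 1) / 2 := by
    field_simp at hk
    linarith
  have hk0 : k = 0 := by
    have hlower : (-1 : ℝ) < k := by linarith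
    have hupper : (k : ℝ) < 1 := by linarith
    norm_cast at hlower hupper
    omega
  exact hα (by simp [hαk, hk0])

section ExponentialDamping

variable {E : Type*} [NormedAddCommGroup E]

lemma exp_smul_convolution [NormedSpace ℝ E] (c : ℝ) (f : ℝ → ℝ) (g : ℝ → E) (x : ℝ) :
    Real.exp (c * x) • (f ⋆[lsmul ℝ ℝ] g) x =
      ((fun t => Real.exp (c * t) * f t) ⋆[lsmul ℝ ℝ] fun t => Real.exp (c * t) • g t) x := by
  simp only [convolution_lsmul, ← integral_smul, smul_smul]
  refine integral_congr_ae (.of_forall fun t => ?_)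
  have hexp : Real.exp (c * x) = Real.exp (c * t) * Real.exp (c * (x - t)) := by
    rw [← Real.exp_add]
    ring_nf
  simp only [hexp]
  ring_nf

variable {g : ℝ → E} {a ε : ℝ}

lemma norm_exp_neg_mul_smul_le [NormedSpace ℝ E] (hε : 0 ≤ ε) (hga : ∀ x < a, g x = 0) (x : ℝ) :
    ‖Real.exp (-ε * x) • g x‖ ≤ Real.exp (ε * |a|) * ‖g x‖ := by
  rcases lt_or_ge x a with hx | hx
  · simp [hga x hx]
  · have hexponent : -ε * x ≤ ε * |a| := by nlinarith [neg_abs_le a]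
    rw [norm_smul, Real.norm_of_nonneg (Real.exp_nonneg _)]
    gcongr

lemma integrable_exp_neg_mul_smul [NormedSpace ℝ E] (hε : 0 ≤ ε) (hg : Integrable g)
    (hga : ∀ x < a, g x = 0) : Integrable fun x => Real.exp (-ε * x) • g x :=
  (hg.norm.const_mul _).mono' ((by fun_prop : Continuous fun x => Real.exp (-ε * x))
    |>.aestronglyMeasurable.smul hg.aestronglyMeasurable)
    (.of_forall (norm_exp_neg_mul_smul_le hε hga))

lemma tendsto_fourier_exp_neg_mul_smul [NormedSpace ℂ E] (hg : Integrable g)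
    (hga : ∀ x < a, g x = 0) (ξ : ℝ) :
    Tendsto (fun ε => 𝓕 (fun x => Real.exp (-ε * x) • g x) ξ) (𝓝[>] 0) (𝓝 (𝓕 g ξ)) := by
  simp only [Real.fourier_eq]
  refine tendsto_integral_filter_of_dominated_convergence
    (fun x => Real.exp |a| * ‖g x‖) ?_ ?_ (hg.norm.const_mul _) (.of_forall fun x => ?_)
  · filter_upwards [self_mem_nhdsWithin] with ε (hε : 0 < ε)
    exact ((Real.fourierIntegral_convergent_iff ξ).2
      (integrable_exp_neg_mul_smul hε.le hg hga)).aestronglyMeasurable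
  · filter_upwards [Ioo_mem_nhdsGT one_pos] with ε hε
    refine .of_forall fun x => ?_
    rw [Circle.norm_smul]
    refine (norm_exp_neg_mul_smul_le hε.1.le hga x).trans ?_
    gcongr
    exact mul_le_of_le_one_left (abs_nonneg a) hε.2.le
  · have hcont : Continuous fun ε : ℝ =>
        Real.fourierChar (-inner ℝ x ξ) • (Real.exp (-ε * x) • g x) := by fun_prop
    exact (hcont.tendsto' 0 _ (by simp)).mono_left nhdsWithin_le_nhds

end ExponentialDamping

section PowerTail

variable {E : Type*} [NormedAddCommGroup E] [NormedSpace ℝ E] {u v : ℝ → E}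

lemma locallyIntegrable_indicator_Ioi_one_rpow (r : ℝ) :
    LocallyIntegrable ((Ioi 1).indicator fun t : ℝ => t ^ r) := by
  have hcont : Continuous fun t : ℝ => max t 1 ^ r :=
    (by fun_prop : Continuous fun t : ℝ => max t 1).rpow_const
      fun t => .inl (lt_max_of_lt_right one_pos).ne'
  have hcongr : ((Ioi 1).indicator fun t : ℝ => t ^ r) =
      (Ioi 1).indicator fun t : ℝ => max t 1 ^ r :=
    indicator_congr fun t (ht : 1 < t) => by rw [max_eq_left ht.le]
  rw [hcongr]
  exact hcont.locallyIntegrable.indicator measurableSet_Ioi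

lemma indicator_Ioi_one_rpow_convolution_apply (r : ℝ) (v : ℝ → E) (x : ℝ) :
    (((Ioi 1).indicator fun t : ℝ => t ^ r) ⋆[lsmul ℝ ℝ] v) x =
      ∫ t in Ioi 1, t ^ r • v (x - t) := by
  rw [convolution_lsmul, ← integral_indicator measurableSet_Ioi]
  simp only [indicator_smul_left]

lemma integrableOn_Ioi_one_rpow_smul_comp_sub (hv : Continuous v) (hsupp : HasCompactSupport v)
    (r x : ℝ) : IntegrableOn (fun t : ℝ => t ^ r • v (x - t)) (Ioi 1) := by
  have hexists := hsupp.convolutionExists_right (lsmul ℝ ℝ)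
    (locallyIntegrable_indicator_Ioi_one_rpow r) hv x
  refine (integrable_indicator_iff measurableSet_Ioi).1 (hexists.integrable.congr
    (.of_forall fun t => ?_))
  simp only [lsmul_apply, indicator_smul_left]

variable [CompleteSpace E]

lemma indicator_Ioi_one_rpow_convolution_deriv (hu : ContDiff ℝ 1 u) (hsupp : HasCompactSupport u)
    (r x : ℝ) :
    (((Ioi 1).indicator fun t : ℝ => t ^ r) ⋆[lsmul ℝ ℝ] deriv u) x =
      u (x - 1) + r • (((Ioi 1).indicator fun t : ℝ => t ^ (r - 1)) ⋆[lsmul ℝ ℝ] u) x := by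
  have hderiv : ∀ t ∈ Ici (1 : ℝ), HasDerivAt (fun t : ℝ => t ^ r • u (x - t))
      (r • t ^ (r - 1) • u (x - t) - t ^ r • deriv u (x - t)) t := by
    intro t (ht : 1 ≤ t)
    have hcomp : HasDerivAt (fun t => u (x - t)) (-deriv u (x - t)) t :=
      ((hu.differentiable one_ne_zero (x - t)).hasDerivAt).comp_const_sub x t
    refine ((Real.hasDerivAt_rpow_const (.inl (by positivity))).smul hcomp).congr_deriv ?_
    rw [smul_neg, smul_smul, neg_add_eq_sub]
  have hlower : IntegrableOn (fun t : ℝ => r • t ^ (r - 1) • u (x - t)) (Ioi 1) :=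
    (integrableOn_Ioi_one_rpow_smul_comp_sub hu.continuous hsupp (r - 1) x).smul r
  have hupper := integrableOn_Ioi_one_rpow_smul_comp_sub (hu.continuous_deriv le_rfl)
    hsupp.deriv r x
  have hvanish : Tendsto (fun t : ℝ => t ^ r • u (x - t)) atTop (𝓝 0) :=
    (hsupp.comp_homeomorph (Homeomorph.subLeft x)).smul_left.is_zero_at_infty.mono_left
      atTop_le_cocompact
  have hparts := integral_Ioi_of_hasDerivAt_of_tendsto' hderiv (hlower.sub hupper) hvanish
  rw [integral_sub hlower hupper, integral_smul, Real.one_rpow, one_smul, zero_sub,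
    sub_eq_iff_eq_add, neg_add_eq_sub] at hparts
  rw [indicator_Ioi_one_rpow_convolution_apply, indicator_Ioi_one_rpow_convolution_apply, hparts,
    add_sub_cancel]

end PowerTail

/-- The convolution kernel `t ↦ t^(-α)` on `(0, ∞)` of the left Riemann–Liouville integral of order
`1 - α`, without its normalising factor `1 / Γ(1 - α)`. -/
noncomputable def abelKernel (α : ℝ) : ℝ → ℝ :=
  (Ioi 0).indicator fun t => t ^ (-α)

namespace abelKernel

variable {α : ℝ}

lemma integrable_exp_neg_mul_mul {ε : ℝ} (hα : α < 1) (hε : 0 < ε) :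
    Integrable fun t => Real.exp (-ε * t) * abelKernel α t := by
  have hdamped := integrableOn_rpow_mul_exp_neg_mul_rpow (p := 1) (s := -α) (b := ε)
    (by linarith) one_pos hε
  refine (hdamped.integrable_indicator measurableSet_Ioi).congr (.of_forall fun t => ?_)
  by_cases ht : 0 < t <;> simp [abelKernel, ht, mul_comm]

lemma locallyIntegrable (hα : α < 1) : LocallyIntegrable (abelKernel α) := by
  refine ((integrable_exp_neg_mul_mul hα one_pos).locallyIntegrable.continuous_mul
    Real.continuous_exp).congr (.of_forall fun t => ?_)
  simp only [← mul_assoc, ← Real.exp_add]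
  simp

lemma fourier_exp_neg_mul_mul {ε : ℝ} (hα : α < 1) (hε : 0 < ε) (ξ : ℝ) :
    𝓕 (fun t => (Real.exp (-ε * t) * abelKernel α t : ℂ)) ξ =
      Complex.Gamma (1 - α) * (ε + 2 * π * I * ξ) ^ (α - 1 : ℂ) := by
  have hre : 0 < (ε + 2 * π * I * ξ : ℂ).re := by simpa
  have hlaplace := integral_cpow_mul_cexp_neg_mul_Ioi (a := 1 - α) (by simpa) hre
  rw [neg_sub] at hlaplace
  rw [← hlaplace, Real.fourier_eq', ← integral_indicator measurableSet_Ioi]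
  refine integral_congr_ae (.of_forall fun t => ?_)
  by_cases ht : 0 < t
  · have hexp : Complex.exp (-((ε + 2 * π * I * ξ) * t)) =
        Complex.exp (↑(-2 * π * inner ℝ t ξ) * I) * Complex.exp (-ε * t) := by
      rw [← Complex.exp_add]
      simp only [neg_mul, RCLike.inner_apply, ringHom_apply, Complex.ofReal_neg,
        Complex.ofReal_mul, Complex.ofReal_ofNat]
      ring_nf
    simp only [abelKernel, indicator_of_mem (mem_Ioi.2 ht), Complex.ofReal_cpow ht.le, hexp,
      neg_mul, Complex.ofReal_neg, Complex.ofReal_mul, Complex.ofReal_exp, smul_eq_mul,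
      sub_sub_cancel_left]
    ring
  · simp [abelKernel, ht]

section Convolution

variable {E : Type*} [NormedAddCommGroup E] {v : ℝ → E} {a : ℝ}

lemma convolution_eq_zero_of_lt [NormedSpace ℝ E] (hva : ∀ x < a, v x = 0) {x : ℝ} (hx : x < a) :
    (abelKernel α ⋆[lsmul ℝ ℝ] v) x = 0 := by
  rw [convolution_lsmul]
  refine integral_eq_zero_of_ae (.of_forall fun t => ?_)
  by_cases ht : 0 < t
  · simp [hva (x - t) (by linarith)]
  · simp [abelKernel, ht]

variable [NormedSpace ℂ E] [CompleteSpace E]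

lemma fourier_exp_neg_mul_smul_convolution {ε : ℝ} (hα : α < 1) (hε : 0 < ε) (hv : Integrable v)
    (hva : ∀ x < a, v x = 0) (ξ : ℝ) :
    𝓕 (fun x => Real.exp (-ε * x) • (abelKernel α ⋆[lsmul ℝ ℝ] v) x) ξ =
      (Complex.Gamma (1 - α) * (ε + 2 * π * I * ξ) ^ (α - 1 : ℂ)) •
        𝓕 (fun x => Real.exp (-ε * x) • v x) ξ := by
  have hcomplex : (fun x => Real.exp (-ε * x) • (abelKernel α ⋆[lsmul ℝ ℝ] v) x) =
      (fun t => (Real.exp (-ε * t) * abelKernel α t : ℂ)) ⋆[lsmul ℂ ℂ]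
        fun t => Real.exp (-ε * t) • v t := by
    ext x
    rw [exp_smul_convolution]
    simp only [convolution_lsmul, ← Complex.ofReal_mul, Complex.coe_smul]
  rw [hcomplex, ← fourier_exp_neg_mul_mul hα hε]
  refine Real.fourier_smul_convolution_eq ?_ (integrable_exp_neg_mul_smul hε.le hv hva) ξ
  simpa using! (integrable_exp_neg_mul_mul hα hε).ofReal (𝕜 := ℂ)

lemma fourier_convolution (hα : α < 1) (hv : Integrable v) (hva : ∀ x < a, v x = 0)
    (hconv : Integrable (abelKernel α ⋆[lsmul ℝ ℝ] v)) {ξ : ℝ} (hξ : ξ ≠ 0) :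
    𝓕 (abelKernel α ⋆[lsmul ℝ ℝ] v) ξ =
      (Complex.Gamma (1 - α) * (2 * π * I * ξ) ^ (α - 1 : ℂ)) • 𝓕 v ξ := by
  have hslit : (2 * π * I * ξ : ℂ) ∈ Complex.slitPlane := by
    refine Complex.mem_slitPlane_iff.2 (.inr ?_)
    simp [hξ, pi_ne_zero]
  have hsymbol : Tendsto (fun ε : ℝ => (ε + 2 * π * I * ξ : ℂ) ^ (α - 1 : ℂ)) (𝓝[>] 0)
      (𝓝 ((2 * π * I * ξ) ^ (α - 1 : ℂ))) := by
    have hbase : Tendsto (fun ε : ℝ => (ε + 2 * π * I * ξ : ℂ)) (𝓝[>] 0) (𝓝 (2 * π * I * ξ)) :=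
      ((by fun_prop : Continuous fun ε : ℝ => (ε + 2 * π * I * ξ : ℂ)).tendsto' 0 _
        (by simp)).mono_left nhdsWithin_le_nhds
    exact (continuousAt_cpow_const hslit).tendsto.comp hbase
  refine tendsto_nhds_unique (tendsto_fourier_exp_neg_mul_smul hconv
    (fun x hx => convolution_eq_zero_of_lt hva hx) ξ) ?_
  refine ((hsymbol.const_mul _).smul (tendsto_fourier_exp_neg_mul_smul hv hva ξ)).congr' ?_
  filter_upwards [self_mem_nhdsWithin] with ε hε
  exact (fourier_exp_neg_mul_smul_convolution hα hε hv hva ξ).symm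

end Convolution

section Derivative

variable {E : Type*} [NormedAddCommGroup E] {u : ℝ → E}

lemma integrable_convolution_deriv [NormedSpace ℝ E] [CompleteSpace E] (hα0 : 0 < α) (hα1 : α < 1)
    (hu : ContDiff ℝ 1 u) (hsupp : HasCompactSupport u) :
    Integrable (abelKernel α ⋆[lsmul ℝ ℝ] deriv u) := by
  have hu' : Continuous (deriv u) := hu.continuous_deriv le_rfl
  have hhead : Integrable ((Ioc 0 1).indicator (abelKernel α)) :=
    (((locallyIntegrable hα1).integrableOn_isCompact isCompact_Icc).mono_set
      Ioc_subset_Icc_self).integrable_indicator measurableSet_Ioc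
  have htail : Integrable ((Ioi 1).indicator fun t : ℝ => t ^ (-α - 1)) :=
    (integrableOn_Ioi_rpow_of_lt (by linarith) one_pos).integrable_indicator measurableSet_Ioi
  have hsplit : abelKernel α =
      (Ioc 0 1).indicator (abelKernel α) + (Ioi 1).indicator fun t : ℝ => t ^ (-α) := by
    ext t
    rcases le_or_gt t 1 with ht | ht
    · by_cases ht0 : 0 < t <;> simp [abelKernel, ht, ht0, ht.not_gt]
    · simp [abelKernel, ht, ht.not_ge, one_pos.trans ht]
  rw [hsplit, ConvolutionExists.add_distrib
    (hsupp.deriv.convolutionExists_right _ hhead.locallyIntegrable hu')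
    (hsupp.deriv.convolutionExists_right _ (locallyIntegrable_indicator_Ioi_one_rpow _) hu')]
  refine (hhead.integrable_convolution _ (hu'.integrable_of_hasCompactSupport hsupp.deriv)).add ?_
  have hu_int : Integrable u := hu.continuous.integrable_of_hasCompactSupport hsupp
  refine ((hu_int.comp_sub_right 1).add
    ((htail.integrable_convolution (lsmul ℝ ℝ) hu_int).smul (-α))).congr (.of_forall fun x => ?_)
  exact (indicator_Ioi_one_rpow_convolution_deriv hu hsupp (-α) x).symm

lemma fourier_convolution_deriv [NormedSpace ℂ E] [CompleteSpace E] (hα0 : 0 < α) (hα1 : α < 1)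
    (hu : ContDiff ℝ 1 u) (hsupp : HasCompactSupport u) {ξ : ℝ} (hξ : ξ ≠ 0) :
    𝓕 (abelKernel α ⋆[lsmul ℝ ℝ] deriv u) ξ =
      (Complex.Gamma (1 - α) * (2 * π * I * ξ) ^ (α : ℂ)) • 𝓕 u ξ := by
  obtain ⟨a, ha⟩ := hsupp.deriv.isCompact.bddBelow
  have hvanish : ∀ x < a, deriv u x = 0 := fun x hx =>
    image_eq_zero_of_notMem_tsupport fun hmem => hx.not_ge (ha hmem)
  have hbase : (2 * π * I * ξ : ℂ) ≠ 0 := by simp [hξ, pi_ne_zero]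
  have hu' : Integrable (deriv u) :=
    (hu.continuous_deriv le_rfl).integrable_of_hasCompactSupport hsupp.deriv
  rw [fourier_convolution hα1 hu' hvanish (integrable_convolution_deriv hα0 hα1 hu hsupp) hξ,
    Real.fourier_deriv (hu.continuous.integrable_of_hasCompactSupport hsupp)
      (hu.differentiable one_ne_zero) hu', smul_smul, mul_assoc]
  nth_rw 2 [← Complex.cpow_one (2 * π * I * ξ)]
  rw [← Complex.cpow_add _ _ hbase, sub_add_cancel]

end Derivative

end abelKernel

section FractionalDerivative

variable {α ξ : ℝ} {u : ℝ → ℝ}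

lemma integral_Iic_rpow_mul_eq_convolution (α : ℝ) (u : ℝ → ℝ) (y : ℝ) :
    ∫ s in Iic y, (y - s) ^ (-α) * u s = (abelKernel α ⋆[lsmul ℝ ℝ] u) y := by
  rw [convolution_lsmul_swap, integral_Iic_eq_integral_Iio, ← integral_indicator measurableSet_Iio]
  refine integral_congr_ae (.of_forall fun s => ?_)
  by_cases hs : s < y <;> simp [abelKernel, hs]

lemma leftFracDerivR_eq_convolution (hα : α < 1) (hu : ContDiff ℝ 1 u)
    (hsupp : HasCompactSupport u) :
    leftFracDerivR α u = (1 / Gamma (1 - α)) • (abelKernel α ⋆[lsmul ℝ ℝ] deriv u) := by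
  ext x
  rw [leftFracDerivR, funext (integral_Iic_rpow_mul_eq_convolution α u),
    (hsupp.hasDerivAt_convolution_right _ (abelKernel.locallyIntegrable hα) hu x).deriv,
    Pi.smul_apply, smul_eq_mul]

lemma continuous_leftFracDerivR (hα : α < 1) (hu : ContDiff ℝ 1 u) (hsupp : HasCompactSupport u) :
    Continuous (leftFracDerivR α u) := by
  rw [leftFracDerivR_eq_convolution hα hu hsupp]
  exact (hsupp.deriv.continuous_convolution_right _ (abelKernel.locallyIntegrable hα)
    (hu.continuous_deriv le_rfl)).const_smul _

lemma integrable_leftFracDerivR (hα0 : 0 < α) (hα1 : α < 1) (hu : ContDiff ℝ 1 u)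
    (hsupp : HasCompactSupport u) : Integrable (leftFracDerivR α u) := by
  rw [leftFracDerivR_eq_convolution hα1 hu hsupp]
  exact (abelKernel.integrable_convolution_deriv hα0 hα1 hu hsupp).smul _

lemma fourier_leftFracDerivR (hα0 : 0 < α) (hα1 : α < 1) (hu : ContDiff ℝ 1 u)
    (hsupp : HasCompactSupport u) (hξ : ξ ≠ 0) :
    𝓕 (fun x => (leftFracDerivR α u x : ℂ)) ξ =
      (2 * π * I * ξ) ^ (α : ℂ) * 𝓕 (fun x => (u x : ℂ)) ξ := by
  have hderiv : deriv (fun x => (u x : ℂ)) = fun x => ((deriv u x : ℝ) : ℂ) := funext fun x =>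
    ((hu.differentiable one_ne_zero x).hasDerivAt.ofReal_comp).deriv
  have hGamma : Complex.Gamma (1 - α) = Gamma (1 - α) := by
    rw [← Complex.Gamma_ofReal]
    simp
  have hGamma_ne : Complex.Gamma (1 - α) ≠ 0 := Complex.Gamma_ne_zero_of_re_pos (by simpa)
  have hcomplex : (fun x => (leftFracDerivR α u x : ℂ)) =
      (1 / Complex.Gamma (1 - α)) • (abelKernel α ⋆[lsmul ℝ ℝ] deriv fun x => (u x : ℂ)) := by
    ext x
    simp [leftFracDerivR_eq_convolution hα1 hu hsupp, convolution_lsmul, hderiv, hGamma,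
      ← integral_complex_ofReal]
  have hsmul : 𝓕 ((1 / Complex.Gamma (1 - α)) •
      (abelKernel α ⋆[lsmul ℝ ℝ] deriv fun x => (u x : ℂ))) = (1 / Complex.Gamma (1 - α)) •
        𝓕 (abelKernel α ⋆[lsmul ℝ ℝ] deriv fun x => (u x : ℂ)) :=
    VectorFourier.fourierIntegral_const_smul _ _ _ _ _
  rw [hcomplex, hsmul, Pi.smul_apply, abelKernel.fourier_convolution_deriv hα0 hα1
    (u := fun x => (u x : ℂ)) (Complex.ofRealCLM.contDiff.comp hu)
    (hsupp.comp_left Complex.ofReal_zero) hξ, smul_smul, smul_eq_mul]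
  field_simp

lemma rightFracDerivR_eq_leftFracDerivR_comp_neg (α : ℝ) (u : ℝ → ℝ) (x : ℝ) :
    rightFracDerivR α u x = leftFracDerivR α (fun y => u (-y)) (-x) := by
  have hreflect : (fun y => ∫ s in Ici y, (s - y) ^ (-α) * u s) =
      fun y => ∫ s in Iic (-y), (-y - s) ^ (-α) * u (-s) := by
    ext y
    rw [integral_Ici_eq_integral_Ioi, ← neg_neg y,
      ← integral_comp_neg_Iic (-y) fun s => (s - - -y) ^ (-α) * u s, neg_neg]
    simp only [sub_eq_add_neg, add_comm]
  rw [rightFracDerivR, leftFracDerivR, hreflect,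
    deriv_comp_neg (fun y => ∫ s in Iic y, (y - s) ^ (-α) * u (-s))]
  ring

lemma integrable_rightFracDerivR (hα0 : 0 < α) (hα1 : α < 1) (hu : ContDiff ℝ 1 u)
    (hsupp : HasCompactSupport u) : Integrable (rightFracDerivR α u) := by
  rw [funext (rightFracDerivR_eq_leftFracDerivR_comp_neg α u)]
  exact (integrable_leftFracDerivR hα0 hα1 (hu.comp contDiff_neg)
    (hsupp.comp_homeomorph (Homeomorph.neg ℝ))).comp_neg

lemma fourier_rightFracDerivR (hα0 : 0 < α) (hα1 : α < 1) (hu : ContDiff ℝ 1 u)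
    (hsupp : HasCompactSupport u) (hξ : ξ ≠ 0) :
    𝓕 (fun x => (rightFracDerivR α u x : ℂ)) ξ =
      (-(2 * π * I * ξ)) ^ (α : ℂ) * 𝓕 (fun x => (u x : ℂ)) ξ := by
  simp only [rightFracDerivR_eq_leftFracDerivR_comp_neg]
  rw [fourier_comp_neg fun x => (leftFracDerivR α (fun y => u (-y)) x : ℂ),
    fourier_leftFracDerivR hα0 hα1 (u := fun y => u (-y)) (hu.comp contDiff_neg)
      (hsupp.comp_homeomorph (Homeomorph.neg ℝ)) (neg_ne_zero.2 hξ),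
    fourier_comp_neg fun x => (u x : ℂ)]
  simp

end FractionalDerivative

section Coercivity

variable {α : ℝ} {u : ℝ → ℝ}

lemma integrable_abs_rpow_mul_norm_fourier_ofReal (hα0 : 0 ≤ α) (hα1 : α < 1)
    (hu : ContDiff ℝ 2 u) (hsupp : HasCompactSupport u) :
    Integrable fun ξ => |2 * π * ξ| ^ α * ‖𝓕 (fun x => (u x : ℂ)) ξ‖ := by
  have hv : ContDiff ℝ 2 fun x => (u x : ℂ) := Complex.ofRealCLM.contDiff.comp hu
  have hvsupp : HasCompactSupport fun x => (u x : ℂ) := hsupp.comp_left Complex.ofReal_zero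
  have hv' := (contDiff_succ_iff_deriv (n := 1)).1 hv |>.2.2
  exact integrable_abs_rpow_mul_norm_fourier hv
    (hv.continuous.integrable_of_hasCompactSupport hvsupp)
    (hv'.continuous.integrable_of_hasCompactSupport hvsupp.deriv)
    ((hv'.continuous_deriv le_rfl).integrable_of_hasCompactSupport hvsupp.deriv.deriv) hα0 hα1

lemma integrable_fourier_leftFracDerivR (hα0 : 0 < α) (hα1 : α < 1) (hu : ContDiff ℝ 2 u)
    (hsupp : HasCompactSupport u) : Integrable (𝓕 fun x => (leftFracDerivR α u x : ℂ)) := by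
  have hu1 : ContDiff ℝ 1 u := hu.of_le one_le_two
  have hcont : Continuous (𝓕 fun x => (leftFracDerivR α u x : ℂ)) :=
    continuous_fourier (integrable_leftFracDerivR hα0 hα1 hu1 hsupp).ofReal
  refine (integrable_abs_rpow_mul_norm_fourier_ofReal hα0.le hα1 hu hsupp).mono'
    hcont.aestronglyMeasurable ?_
  filter_upwards [Measure.ae_ne volume 0] with ξ hξ
  rw [fourier_leftFracDerivR hα0 hα1 hu1 hsupp hξ, norm_mul, Complex.norm_cpow_real]
  simp [abs_mul]

lemma re_inner_fourier_rightFracDerivR_leftFracDerivR (hα0 : 0 < α) (hα1 : α < 1)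
    (hu : ContDiff ℝ 1 u) (hsupp : HasCompactSupport u) {ξ : ℝ} (hξ : ξ ≠ 0) :
    (inner ℂ (𝓕 (fun x => (rightFracDerivR α u x : ℂ)) ξ)
      (𝓕 (fun x => (leftFracDerivR α u x : ℂ)) ξ)).re =
        cos (α * π) * ‖𝓕 (fun x => (leftFracDerivR α u x : ℂ)) ξ‖ ^ 2 := by
  have hre : (2 * π * I * ξ : ℂ).re = 0 := by simp
  have hne : (2 * π * I * ξ : ℂ) ≠ 0 := by simp [hξ, pi_ne_zero]
  rw [fourier_rightFracDerivR hα0 hα1 hu hsupp hξ, fourier_leftFracDerivR hα0 hα1 hu hsupp hξ]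
  set z : ℂ := 2 * π * I * ξ
  set w := 𝓕 (fun x => (u x : ℂ)) ξ
  have hinner : inner ℂ ((-z) ^ (α : ℂ) * w) (z ^ (α : ℂ) * w) =
      z ^ (α : ℂ) * z ^ (α : ℂ) * (‖w‖ ^ 2 : ℝ) := by
    rw [RCLike.inner_apply, map_mul, conj_neg_cpow_of_re_eq_zero hre, mul_mul_mul_comm,
      Complex.mul_conj, Complex.normSq_eq_norm_sq]
  rw [hinner, Complex.re_mul_ofReal, re_cpow_mul_self_of_re_eq_zero hre hne, norm_mul, mul_pow,
    mul_assoc]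

lemma integral_leftFracDerivR_sq (hα0 : 0 < α) (hα1 : α < 1) (hu : ContDiff ℝ 2 u)
    (hsupp : HasCompactSupport u) :
    ∫ x, leftFracDerivR α u x ^ 2 = ∫ ξ, ‖𝓕 (fun x => (leftFracDerivR α u x : ℂ)) ξ‖ ^ 2 := by
  have hu1 : ContDiff ℝ 1 u := hu.of_le one_le_two
  have hint := integrable_leftFracDerivR hα0 hα1 hu1 hsupp
  simp only [sq (leftFracDerivR α u _)]
  rw [integral_mul_eq_integral_re_inner_fourier hint (continuous_leftFracDerivR hα1 hu1 hsupp) hint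
    (integrable_fourier_leftFracDerivR hα0 hα1 hu hsupp)]
  simp only [inner_self_eq_norm_sq_to_K]
  norm_cast

lemma integral_leftFracDerivR_mul_rightFracDerivR (hα0 : 0 < α) (hα1 : α < 1)
    (hu : ContDiff ℝ 2 u) (hsupp : HasCompactSupport u) :
    ∫ x, leftFracDerivR α u x * rightFracDerivR α u x =
      cos (α * π) * ∫ x, leftFracDerivR α u x ^ 2 := by
  have hu1 : ContDiff ℝ 1 u := hu.of_le one_le_two
  simp only [mul_comm (leftFracDerivR α u _)]
  rw [integral_leftFracDerivR_sq hα0 hα1 hu hsupp, ← integral_const_mul,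
    integral_mul_eq_integral_re_inner_fourier (integrable_rightFracDerivR hα0 hα1 hu1 hsupp)
      (continuous_leftFracDerivR hα1 hu1 hsupp) (integrable_leftFracDerivR hα0 hα1 hu1 hsupp)
      (integrable_fourier_leftFracDerivR hα0 hα1 hu hsupp)]
  refine integral_congr_ae ?_
  filter_upwards [Measure.ae_ne volume 0] with ξ hξ
  exact re_inner_fourier_rightFracDerivR_leftFracDerivR hα0 hα1 hu1 hsupp hξ

lemma integral_leftFracDerivR_sq_eq_zero_iff (hα0 : 0 < α) (hα1 : α < 1) (hu : ContDiff ℝ 2 u)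
    (hsupp : HasCompactSupport u) : ∫ x, leftFracDerivR α u x ^ 2 = 0 ↔ u = 0 := by
  have hu1 : ContDiff ℝ 1 u := hu.of_le one_le_two
  refine ⟨fun hzero => ?_, fun hzero => by simp [hzero, leftFracDerivR]⟩
  have hsq : Integrable fun ξ => ‖𝓕 (fun x => (leftFracDerivR α u x : ℂ)) ξ‖ ^ 2 := by
    have hinner := integrable_inner_fourier_fourier
      (integrable_leftFracDerivR hα0 hα1 hu1 hsupp).ofReal
      (integrable_fourier_leftFracDerivR hα0 hα1 hu hsupp)
    refine hinner.norm.congr (.of_forall fun ξ => ?_)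
    simp [inner_self_eq_norm_sq_to_K]
  rw [integral_leftFracDerivR_sq hα0 hα1 hu hsupp,
    integral_eq_zero_iff_of_nonneg (fun ξ => sq_nonneg _) hsq] at hzero
  have hfourier : 𝓕 (fun x => (u x : ℂ)) =ᵐ[volume] 0 := by
    filter_upwards [hzero, Measure.ae_ne volume 0] with ξ hξzero hξ
    have hproduct : (2 * π * I * ξ) ^ (α : ℂ) * 𝓕 (fun x => (u x : ℂ)) ξ = 0 := by
      rw [← fourier_leftFracDerivR hα0 hα1 hu1 hsupp hξ]
      simpa using! hξzero
    refine (mul_eq_zero.1 hproduct).resolve_left ?_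
    simp [Complex.cpow_eq_zero_iff, hξ, pi_ne_zero]
  have hcont : Continuous fun x => (u x : ℂ) := Complex.continuous_ofReal.comp hu.continuous
  have hu_eq := eq_zero_of_fourier_ae_eq_zero hcont
    (hcont.integrable_of_hasCompactSupport (hsupp.comp_left Complex.ofReal_zero)) hfourier
  exact funext fun x => by simpa using congrFun hu_eq x

end Coercivity

theorem riesz_bilinear_coercive_general (α : ℝ) (u : ℝ → ℝ) (hα0 : 0 < α) (hα1 : α < 1)
    (hα : α ≠ 1 / 2) (hu : ContDiff ℝ 2 u) (hsupp : HasCompactSupport u) :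
    (2 * (1 / (2 * Real.cos (α * Real.pi))) *
        ∫ x : ℝ, leftFracDerivR α u x * rightFracDerivR α u x)
      = (∫ x : ℝ, (leftFracDerivR α u x) ^ 2) ∧
    0 ≤ (∫ x : ℝ, (leftFracDerivR α u x) ^ 2) ∧
    ((∫ x : ℝ, (leftFracDerivR α u x) ^ 2) = 0 ↔ u = 0) := by
  refine ⟨?_, integral_nonneg fun x => sq_nonneg _,
    integral_leftFracDerivR_sq_eq_zero_iff hα0 hα1 hu hsupp⟩
  have hcos := cos_mul_pi_ne_zero hα0 hα1 hα
  rw [integral_leftFracDerivR_mul_rightFracDerivR hα0 hα1 hu hsupp]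
  field_simp

/-- Coercivity of the Riesz fractional bilinear form in Fourier form: for
`α ∈ (1/2,1)`, `c_α = 1/(2cos(απ))` and `u` smooth with compact support,
`a(u,u) = 2 c_α ({}_{-∞}D_x^α u, {}_xD_∞^α u) = ‖{}_{-∞}D_x^α u‖² ≥ 0`,
with equality iff `u = 0`. -/
theorem riesz_bilinear_coercive
    (α : ℝ) (u : ℝ → ℝ)
    (hα0 : 1 / 2 < α) (hα1 : α < 1)
    (hu : ContDiff ℝ (⊤ : ℕ∞) u) (hsupp : HasCompactSupport u) :
    (2 * (1 / (2 * Real.cos (α * Real.pi))) *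
        ∫ x : ℝ, leftFracDerivR α u x * rightFracDerivR α u x)
      = (∫ x : ℝ, (leftFracDerivR α u x) ^ 2) ∧
    0 ≤ (∫ x : ℝ, (leftFracDerivR α u x) ^ 2) ∧
    ((∫ x : ℝ, (leftFracDerivR α u x) ^ 2) = 0 ↔ u = 0) := by
  exact riesz_bilinear_coercive_general α u (by linarith) hα1 hα0.ne'
    (mod_cast contDiff_infty.1 hu 2) hsupp
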